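/- arXiv:2511.01660 — 4 statements merged into one kernel-verified Lean document; each statement's English description precedes it below -/
import Mathlib

section
/- Let q ∈ ℂ with |q| ≥ 3 and set ρ = |q|/2. For each integer j ≥ 2 let c_j : ℂ ∖ {0} → ℂ satisfy |c_j(w)| ≤ 2^{j−1}/|w| for all w ≠ 0. Let y : ℂ → ℂ satisfy |y(w)| ≤ 1/|q| for all w ∈ D(ρ) and y(z/q) = y(z)/|q| for all z ∈ D(ρ). Then for every z ∈ D(ρ), the series ∑_{j=2}^{∞} c_j(z/q) y(z/q)^j converges absolutely and its sum T[y](z) satisfies |T[y](z)| ≤ 4/(|q|⁴ − 2|q|²) ≤ 1/|q|. -/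
/-!
Write `Q = ‖q‖`. For `|Re z| ≥ Q / 2` one has `‖z / q‖ ≥ 1 / 2`, so `‖c_j (z / q)‖ ≤ 2 ^ j`, and the
scaling relation gives `‖y (z / q)‖ ≤ 1 / Q ^ 2`. The series is therefore dominated by the geometric
series `∑_{j ≥ 2} (2 / Q ^ 2) ^ j`, whose sum is `4 / (Q ^ 4 - 2 Q ^ 2)`.
-/

/-- The series `T[y](z) = ∑_{j≥2} c_j(z/q) y(z/q)^j`
converges absolutely on `D(ρ)` with `ρ = |q|/2`, `|q| ≥ 3`, and its sum is
bounded by `4/(|q|⁴ - 2|q|²) ≤ 1/|q|`. -/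
theorem stmt10 (q : ℂ) (hq : 3 ≤ ‖q‖)
    (c : ℕ → ℂ → ℂ)
    (hc : ∀ j : ℕ, 2 ≤ j → ∀ w : ℂ, w ≠ 0 → ‖c j w‖ ≤ 2 ^ (j - 1) / ‖w‖)
    (y : ℂ → ℂ)
    (hybd : ∀ w : ℂ, ‖q‖ / 2 ≤ |w.re| → ‖y w‖ ≤ 1 / ‖q‖)
    (hyscale : ∀ z : ℂ, ‖q‖ / 2 ≤ |z.re| → y (z / q) = y z / (‖q‖ : ℂ)) :
    ∀ z : ℂ, ‖q‖ / 2 ≤ |z.re| →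
      Summable (fun n : ℕ => ‖c (n + 2) (z / q) * y (z / q) ^ (n + 2)‖) ∧
      ‖∑' n : ℕ, c (n + 2) (z / q) * y (z / q) ^ (n + 2)‖ ≤
        4 / (‖q‖ ^ 4 - 2 * ‖q‖ ^ 2) ∧
      4 / (‖q‖ ^ 4 - 2 * ‖q‖ ^ 2) ≤ 1 / ‖q‖ := by
  intro z hz
  set Q := ‖q‖ with hQ
  have hQ0 : 0 < Q := by linarith
  have hw : 1 / 2 ≤ ‖z / q‖ := by
    rw [norm_div, ← hQ, le_div_iff₀ hQ0]
    have := Complex.abs_re_le_norm z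
    linarith
  have hw0 : z / q ≠ 0 := by
    rw [← norm_pos_iff]
    linarith
  have hy : ‖y (z / q)‖ ≤ 1 / Q ^ 2 := by
    rw [hyscale z hz, norm_div, Complex.norm_real, Real.norm_of_nonneg hQ0.le, div_le_iff₀ hQ0]
    calc ‖y z‖ ≤ 1 / Q := hybd z hz
      _ = 1 / Q ^ 2 * Q := by field_simp
  have hterm : ∀ n : ℕ, ‖c (n + 2) (z / q) * y (z / q) ^ (n + 2)‖ ≤
      (2 / Q ^ 2) ^ 2 * (2 / Q ^ 2) ^ n := by
    intro n
    have hcn : ‖c (n + 2) (z / q)‖ ≤ 2 ^ (n + 2) := by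
      refine (hc (n + 2) (by omega) _ hw0).trans ?_
      rw [div_le_iff₀ (by linarith), show n + 2 - 1 = n + 1 from rfl, pow_succ 2 (n + 1)]
      have : (0 : ℝ) < 2 ^ (n + 1) := by positivity
      nlinarith
    rw [norm_mul, norm_pow]
    calc ‖c (n + 2) (z / q)‖ * ‖y (z / q)‖ ^ (n + 2)
        ≤ 2 ^ (n + 2) * (1 / Q ^ 2) ^ (n + 2) := by gcongr
      _ = (2 / Q ^ 2) ^ 2 * (2 / Q ^ 2) ^ n := by
        rw [← mul_pow, mul_one_div, ← pow_add, add_comm]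
  have hQ9 : 9 ≤ Q ^ 2 := by nlinarith
  have hr1 : 2 / Q ^ 2 < 1 := by
    rw [div_lt_one (by positivity)]
    linarith
  have hgeom := (hasSum_geometric_of_lt_one (by positivity) hr1).mul_left ((2 / Q ^ 2) ^ 2)
  have hden : 0 < Q ^ 4 - 2 * Q ^ 2 := by nlinarith
  have hsum : (2 / Q ^ 2) ^ 2 * (1 - 2 / Q ^ 2)⁻¹ = 4 / (Q ^ 4 - 2 * Q ^ 2) := by
    have h2 : Q ^ 2 - 2 ≠ 0 := by linarith
    rw [show Q ^ 4 - 2 * Q ^ 2 = Q ^ 2 * (Q ^ 2 - 2) by ring,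
      show 1 - 2 / Q ^ 2 = (Q ^ 2 - 2) / Q ^ 2 by field_simp]
    field_simp
    norm_num
  rw [hsum] at hgeom
  refine ⟨Summable.of_nonneg_of_le (fun _ => norm_nonneg _) hterm hgeom.summable,
    tsum_of_norm_bounded hgeom hterm, ?_⟩
  rw [div_le_div_iff₀ hden hQ0]
  nlinarith [mul_le_mul_of_nonneg_left hQ9 (sq_nonneg Q)]
end

section
/- Let q ∈ ℂ with |q| ≥ 3 and set ρ = |q|/2. For each integer j ≥ 2 let c_j : ℂ ∖ {0} → ℂ satisfy |c_j(w)| ≤ 2^{j−1}/|w| for all w ≠ 0. Let y, h : ℂ → ℂ both satisfy |y(w)| ≤ 1/|q| and |h(w)| ≤ 1/|q| for all w ∈ D(ρ), together with y(z/q) = y(z)/|q| and h(z/q) = h(z)/|q| for all z ∈ D(ρ). Define T[y](z) = ∑_{j=2}^{∞} c_j(z/q) y(z/q)^j and similarly T[h](z). Then for every z ∈ D(ρ), one has |T[y](z) − T[h](z)| ≤ (1/|z|) · sup_{w ∈ D(ρ)} |y(w) − h(w)|. -/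
/-!
At `z ∈ D(ρ)` write `a = y (z / q)`, `b = h (z / q)`. The scaling relations give
`‖a‖, ‖b‖ ≤ 1 / ‖q‖ ^ 2 ≤ 1 / 9` and `‖a - b‖ = ‖y z - h z‖ / ‖q‖ ≤ S / ‖q‖`, where `S` is the
supremum. Since `‖a ^ j - b ^ j‖ ≤ j (1 / 9) ^ (j - 1) ‖a - b‖` and `j ≤ 2 ^ (j - 1)`, the `j`-th
term of the difference is at most `(S / ‖z‖) (4 / 9) ^ (j - 1)`: the factor `‖q‖` coming from
`‖c_j (z / q)‖ ≤ 2 ^ (j - 1) ‖q‖ / ‖z‖` cancels. Summing over `j ≥ 2` gives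
`(4 / 5) S / ‖z‖ ≤ S / ‖z‖`.
-/

theorem norm_pow_succ_sub_pow_succ_le (a b : ℂ) (r : ℝ) (ha : ‖a‖ ≤ r) (hb : ‖b‖ ≤ r) (n : ℕ) :
    ‖a ^ (n + 1) - b ^ (n + 1)‖ ≤ (n + 1) * r ^ n * ‖a - b‖ := by
  have hr : 0 ≤ r := (norm_nonneg a).trans ha
  induction n with
  | zero => simp
  | succ n ih =>
    have e : a ^ (n + 1 + 1) - b ^ (n + 1 + 1)
        = a * (a ^ (n + 1) - b ^ (n + 1)) + b ^ (n + 1) * (a - b) := by ring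
    rw [e]
    calc _ ≤ ‖a‖ * ‖a ^ (n + 1) - b ^ (n + 1)‖ + ‖b‖ ^ (n + 1) * ‖a - b‖ := by
          refine (norm_add_le _ _).trans ?_
          rw [norm_mul, norm_mul, norm_pow]
      _ ≤ r * ((n + 1) * r ^ n * ‖a - b‖) + r ^ (n + 1) * ‖a - b‖ := by gcongr
      _ = _ := by push_cast; ring

/-- Absolute convergence of the series defining `T`, for coefficients bounded by
`2 ^ (j - 1) * K`. -/
theorem summable_coeff_mul_pow (d : ℕ → ℂ) (K : ℝ) (hd : ∀ n, ‖d n‖ ≤ 2 ^ (n + 1) * K)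
    (a : ℂ) (ha : ‖a‖ ≤ 1 / 9) : Summable fun n : ℕ => d n * a ^ (n + 2) := by
  have hK : 0 ≤ K := by
    have h0 := (norm_nonneg _).trans (hd 0)
    norm_num at h0
    exact h0
  have hg : Summable fun n : ℕ => (2 * K * (1 / 9) ^ 2) * (2 / 9 : ℝ) ^ n :=
    (summable_geometric_of_lt_one (by norm_num) (by norm_num)).mul_left _
  refine Summable.of_norm_bounded hg fun n => ?_
  rw [norm_mul, norm_pow]
  calc _ ≤ (2 ^ (n + 1) * K) * (1 / 9 : ℝ) ^ (n + 2) := by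
        gcongr
        exact hd n
    _ = _ := by
        rw [show (2 / 9 : ℝ) = 2 * (1 / 9) by norm_num, mul_pow]
        ring

/-- The operator `T[y](z) = ∑_{j≥2} c_j(z/q) y(z/q)^j` is a
contraction with ratio `1/|z|` on `D(ρ)` with `ρ = |q|/2`, `|q| ≥ 3`, with
respect to the sup-metric. -/
theorem stmt11 (q : ℂ) (hq : 3 ≤ ‖q‖)
    (c : ℕ → ℂ → ℂ)
    (hc : ∀ j : ℕ, 2 ≤ j → ∀ w : ℂ, w ≠ 0 → ‖c j w‖ ≤ 2 ^ (j - 1) / ‖w‖)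
    (y h : ℂ → ℂ)
    (hybd : ∀ w : ℂ, ‖q‖ / 2 ≤ |w.re| → ‖y w‖ ≤ 1 / ‖q‖)
    (hhbd : ∀ w : ℂ, ‖q‖ / 2 ≤ |w.re| → ‖h w‖ ≤ 1 / ‖q‖)
    (hyscale : ∀ z : ℂ, ‖q‖ / 2 ≤ |z.re| → y (z / q) = y z / (‖q‖ : ℂ))
    (hhscale : ∀ z : ℂ, ‖q‖ / 2 ≤ |z.re| → h (z / q) = h z / (‖q‖ : ℂ)) :
    ∀ z : ℂ, ‖q‖ / 2 ≤ |z.re| →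
      ‖(∑' n : ℕ, c (n + 2) (z / q) * y (z / q) ^ (n + 2)) -
        (∑' n : ℕ, c (n + 2) (z / q) * h (z / q) ^ (n + 2))‖ ≤
        (1 / ‖z‖) * ⨆ w : {w : ℂ // ‖q‖ / 2 ≤ |w.re|}, ‖y w.1 - h w.1‖ := by
  intro z hz
  have hq0 : 0 < ‖q‖ := by linarith
  have hz0 : 0 < ‖z‖ := by linarith [Complex.abs_re_le_norm z]
  have hw0 : z / q ≠ 0 := div_ne_zero (norm_pos_iff.1 hz0) (norm_pos_iff.1 hq0)
  set S := ⨆ w : {w : ℂ // ‖q‖ / 2 ≤ |w.re|}, ‖y w.1 - h w.1‖ with hS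
  have hbdd : BddAbove (Set.range fun w : {w : ℂ // ‖q‖ / 2 ≤ |w.re|} => ‖y w.1 - h w.1‖) := by
    refine ⟨1 / ‖q‖ + 1 / ‖q‖, ?_⟩
    rintro _ ⟨w, rfl⟩
    exact (norm_sub_le _ _).trans (add_le_add (hybd _ w.2) (hhbd _ w.2))
  have hSz : ‖y z - h z‖ ≤ S := le_ciSup hbdd ⟨z, hz⟩
  have hS0 : 0 ≤ S := (norm_nonneg _).trans hSz
  have hq9 : 1 / ‖q‖ / ‖q‖ ≤ 1 / 9 := by
    rw [div_div]
    exact one_div_le_one_div_of_le (by norm_num) (by nlinarith)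
  have ha : ‖y (z / q)‖ ≤ 1 / 9 := by
    rw [hyscale z hz, norm_div, Complex.norm_real, norm_norm]
    exact (div_le_div_of_nonneg_right (hybd z hz) hq0.le).trans hq9
  have hb : ‖h (z / q)‖ ≤ 1 / 9 := by
    rw [hhscale z hz, norm_div, Complex.norm_real, norm_norm]
    exact (div_le_div_of_nonneg_right (hhbd z hz) hq0.le).trans hq9
  have hab : ‖y (z / q) - h (z / q)‖ ≤ S / ‖q‖ := by
    rw [hyscale z hz, hhscale z hz, ← sub_div, norm_div, Complex.norm_real, norm_norm]
    exact div_le_div_of_nonneg_right hSz hq0.le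
  have hd : ∀ n : ℕ, ‖c (n + 2) (z / q)‖ ≤ 2 ^ (n + 1) * (‖q‖ / ‖z‖) := fun n => by
    have h1 := hc (n + 2) (by omega) (z / q) hw0
    rw [norm_div, show n + 2 - 1 = n + 1 by omega] at h1
    exact h1.trans_eq (by field_simp)
  have hsy := summable_coeff_mul_pow (fun n => c (n + 2) (z / q)) _ hd _ ha
  have hsh := summable_coeff_mul_pow (fun n => c (n + 2) (z / q)) _ hd _ hb
  rw [← hsy.tsum_sub hsh]
  have hgeo : HasSum (fun n : ℕ => (S / ‖z‖ * (4 / 9)) * (4 / 9 : ℝ) ^ n)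
      ((S / ‖z‖ * (4 / 9)) * (1 - 4 / 9)⁻¹) :=
    (hasSum_geometric_of_lt_one (by norm_num) (by norm_num)).mul_left _
  refine (tsum_of_norm_bounded hgeo fun n => ?_).trans ?_
  · rw [← mul_sub, norm_mul]
    have hpow := norm_pow_succ_sub_pow_succ_le _ _ _ ha hb (n + 1)
    have hn : (((n + 1 : ℕ) : ℝ) + 1) ≤ 2 ^ (n + 1) := by
      exact_mod_cast Nat.lt_two_pow_self (n := n + 1)
    calc _ ≤ (2 ^ (n + 1) * (‖q‖ / ‖z‖)) * (2 ^ (n + 1) * (1 / 9 : ℝ) ^ (n + 1) * (S / ‖q‖)) := by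
          refine mul_le_mul (hd n) (hpow.trans ?_) (norm_nonneg _) (by positivity)
          gcongr
      _ = (S / ‖z‖) * (2 ^ (n + 1) * 2 ^ (n + 1) * (1 / 9 : ℝ) ^ (n + 1)) := by field_simp
      _ = _ := by
          rw [← mul_pow, ← mul_pow, show (2 * 2 * (1 / 9) : ℝ) = 4 / 9 by norm_num]
          ring
  · have : 0 ≤ S / ‖z‖ := by positivity
    rw [one_div_mul_eq_div]
    norm_num
    linarith
end

section
/- Let p ≥ 1 and t ≥ 1 be integers, let z ∈ ℂ with |z| ≥ 3, and let a_1,…,a_p, b_1,…,b_t ∈ ℂ satisfy |a_j| ≤ 1/|z| for all 1 ≤ j ≤ p and |b_k| ≤ 1/|z| for all 1 ≤ k ≤ t. Then there exists a sequence (c_j)_{j≥2} of complex numbers with |c_j| ≤ 2^{j−1}/|z| for every j ≥ 2, such that for every w ∈ ℂ with |w| < 1/2 one has 1 + b_1 w + … + b_t w^t ≠ 0 and (a_1 w + a_2 w² + … + a_p w^p)/(1 + b_1 w + … + b_t w^t) = a_1 w + ∑_{j=2}^{∞} c_j w^j, where the series converges absolutely. -/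
/-!
The coefficients `c` are those of the formal quotient `N / D`, where `N = ∑ a_j Xʲ` and
`D = 1 + ∑ b_k Xᵏ`. Comparing coefficients in `C * D = N` gives
`c_n = N_n - ∑_{i<n} c_i b_{n-i}`, and with `x = 1/|z| ≤ 1` this yields
`|c_{n+1}| ≤ x + x ∑_{i≤n} |c_i|`. Inductively `∑_{i≤n} |c_i| ≤ x (2ⁿ - 1)`, whence
`|c_{n+1}| ≤ x 2ⁿ` (`quotient_coeff_bound`). This makes `∑ c_n wⁿ` absolutely convergent for
`|w| < 1/2`, so the Cauchy product turns the formal identity into a numerical one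
(`tsum_mul_eval`). The denominator does not vanish because `|∑ b_k wᵏ| ≤ x ∑ 2⁻ᵏ ≤ x < 1`.
-/

/-- If a sequence starting at `0` satisfies the recursion of the coefficients of a quotient whose
numerator and denominator have coefficients bounded by `x ≤ 1`, it grows at most like `x 2ⁿ⁻¹`. -/
lemma quotient_coeff_bound (x : ℝ) (hx0 : 0 ≤ x) (hx1 : x ≤ 1) (c N d : ℕ → ℂ)
    (hN : ∀ n, ‖N n‖ ≤ x) (hd : ∀ n, 1 ≤ n → ‖d n‖ ≤ x) (hc0 : c 0 = 0)
    (hc : ∀ n, c n = N n - ∑ i ∈ Finset.range n, c i * d (n - i)) (n : ℕ) :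
    ‖c (n + 1)‖ ≤ x * 2 ^ n := by
  have step : ∀ n, ‖c (n + 1)‖ ≤ x + x * ∑ i ∈ Finset.range (n + 1), ‖c i‖ := by
    intro n
    rw [hc (n + 1), Finset.mul_sum]
    refine (norm_sub_le _ _).trans (add_le_add (hN _) ?_)
    refine (norm_sum_le _ _).trans (Finset.sum_le_sum fun i hi => ?_)
    rw [norm_mul, mul_comm]
    have := Finset.mem_range.mp hi
    exact mul_le_mul_of_nonneg_right (hd _ (by omega)) (norm_nonneg _)
  have close : ∀ n : ℕ, x + x * (x * (2 ^ n - 1)) ≤ x * 2 ^ n := by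
    intro n
    have h2 : (1 : ℝ) ≤ 2 ^ n := one_le_pow₀ (by norm_num)
    nlinarith [mul_nonneg (mul_nonneg hx0 (sub_nonneg.mpr hx1)) (sub_nonneg.mpr h2)]
  have hsum : ∀ n, ∑ i ∈ Finset.range (n + 1), ‖c i‖ ≤ x * (2 ^ n - 1) := by
    intro n
    induction n with
    | zero => simp [hc0]
    | succ n ih =>
      rw [Finset.sum_range_succ]
      have h1 := step n
      have h2 := mul_le_mul_of_nonneg_left ih hx0
      have h3 := close n
      rw [pow_succ]
      linarith
  have h1 := step n
  have h2 := mul_le_mul_of_nonneg_left (hsum n) hx0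
  have h3 := close n
  linarith

/-- Evaluation is multiplicative on absolutely convergent power series. -/
lemma tsum_mul_eval (C D : PowerSeries ℂ) (w : ℂ)
    (hC : Summable fun n => ‖C.coeff n * w ^ n‖) (hD : Summable fun n => ‖D.coeff n * w ^ n‖) :
    (∑' n, C.coeff n * w ^ n) * (∑' n, D.coeff n * w ^ n) =
      ∑' n, (C * D).coeff n * w ^ n := by
  rw [tsum_mul_tsum_eq_tsum_sum_antidiagonal_of_summable_norm hC hD]
  congr 1
  ext n
  rw [PowerSeries.coeff_mul, Finset.sum_mul]
  refine Finset.sum_congr rfl fun q hq => ?_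
  rw [← Finset.HasAntidiagonal.mem_antidiagonal.mp hq, pow_add]
  ring

/-- Expansion of `R(z,w)` as a power series around `w = 0`:
with `|z| ≥ 3` and `|a_j|, |b_k| ≤ 1/|z|`, there are coefficients `c_j` with
`|c_j| ≤ 2^{j-1}/|z|` such that, for `|w| < 1/2`, the denominator is nonzero
and `R(z,w) = a₁ w + ∑_{j≥2} c_j wʲ`, the series converging absolutely. -/
theorem stmt17 (p t : ℕ) (hp : 1 ≤ p) (ht : 1 ≤ t) (z : ℂ) (hz : 3 ≤ ‖z‖)
    (a b : ℕ → ℂ)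
    (ha : ∀ j ∈ Finset.Icc 1 p, ‖a j‖ ≤ 1 / ‖z‖)
    (hb : ∀ k ∈ Finset.Icc 1 t, ‖b k‖ ≤ 1 / ‖z‖) :
    ∃ c : ℕ → ℂ, (∀ j : ℕ, 2 ≤ j → ‖c j‖ ≤ 2 ^ (j - 1) / ‖z‖) ∧
      ∀ w : ℂ, ‖w‖ < 1 / 2 →
        (1 + ∑ k ∈ Finset.Icc 1 t, b k * w ^ k) ≠ 0 ∧
        Summable (fun n : ℕ => ‖c (n + 2) * w ^ (n + 2)‖) ∧
        (∑ j ∈ Finset.Icc 1 p, a j * w ^ j) /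
            (1 + ∑ k ∈ Finset.Icc 1 t, b k * w ^ k) =
          a 1 * w + ∑' n : ℕ, c (n + 2) * w ^ (n + 2) := by
  set x : ℝ := 1 / ‖z‖ with hx
  have hzpos : 0 < ‖z‖ := by linarith
  have hx0 : 0 ≤ x := by positivity
  have hx1 : x < 1 := by
    rw [hx, div_lt_one hzpos]
    linarith
  let N : PowerSeries ℂ := PowerSeries.mk fun j => if j ∈ Finset.Icc 1 p then a j else 0
  let B : PowerSeries ℂ := PowerSeries.mk fun k => if k ∈ Finset.Icc 1 t then b k else 0
  let C : PowerSeries ℂ := N * (1 + B)⁻¹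
  have hB0 : PowerSeries.constantCoeff (1 + B) = 1 := by
    simp [B, ← PowerSeries.coeff_zero_eq_constantCoeff_apply, -PowerSeries.coeff_zero_eq_constantCoeff]
  have hCD : C * (1 + B) = N := by
    rw [mul_assoc, PowerSeries.inv_mul_cancel _ (by rw [hB0]; exact one_ne_zero), mul_one]
  have hNn : ∀ n, ‖N.coeff n‖ ≤ x := by
    intro n
    simp only [N, PowerSeries.coeff_mk]
    split_ifs with h
    · exact ha n h
    · simpa using hx0
  have hBn : ∀ n, ‖B.coeff n‖ ≤ x := by
    intro n
    simp only [B, PowerSeries.coeff_mk]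
    split_ifs with h
    · exact hb n h
    · simpa using hx0
  have hBz : B.coeff 0 = 0 := by simp [B]
  have hrec : ∀ n, C.coeff n =
      N.coeff n - ∑ i ∈ Finset.range n, C.coeff i * B.coeff (n - i) := by
    intro n
    have h : C.coeff n + (C * B).coeff n = N.coeff n := by
      rw [← map_add, ← hCD, mul_add, mul_one]
    rw [PowerSeries.coeff_mul n C B, Finset.Nat.sum_antidiagonal_eq_sum_range_succ
      (fun i j => C.coeff i * B.coeff j), Finset.sum_range_succ, Nat.sub_self, hBz, mul_zero,
      add_zero] at h
    exact eq_sub_of_add_eq h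
  have hC0 : C.coeff 0 = 0 := by rw [hrec 0]; simp [N]
  have hC1 : C.coeff 1 = a 1 := by
    rw [hrec 1]
    simp [hC0, N, hp]
  have hbound := quotient_coeff_bound x hx0 hx1.le (fun n => C.coeff n) (fun n => N.coeff n)
    (fun n => B.coeff n) hNn (fun n _ => hBn n) hC0 hrec
  refine ⟨fun n => C.coeff n, ?_, ?_⟩
  · intro j hj
    obtain ⟨m, rfl⟩ : ∃ m, j = m + 1 := ⟨j - 1, by omega⟩
    refine (hbound m).trans_eq ?_
    rw [hx, Nat.add_sub_cancel]
    ring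
  · intro w hw
    have hBsum : HasSum (fun n => B.coeff n * w ^ n) (∑ k ∈ Finset.Icc 1 t, b k * w ^ k) := by
      have h : HasSum (fun n => B.coeff n * w ^ n)
          (∑ k ∈ Finset.Icc 1 t, B.coeff k * w ^ k) :=
        hasSum_sum_of_ne_finset_zero fun n hn => by
          simp only [B, PowerSeries.coeff_mk, if_neg hn, zero_mul]
      convert h using 1
      refine Finset.sum_congr rfl fun k hk => ?_
      simp only [B, PowerSeries.coeff_mk, if_pos hk]
    have hNsum : HasSum (fun n => N.coeff n * w ^ n) (∑ k ∈ Finset.Icc 1 p, a k * w ^ k) := by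
      have h : HasSum (fun n => N.coeff n * w ^ n)
          (∑ k ∈ Finset.Icc 1 p, N.coeff k * w ^ k) :=
        hasSum_sum_of_ne_finset_zero fun n hn => by
          simp only [N, PowerSeries.coeff_mk, if_neg hn, zero_mul]
      convert h using 1
      refine Finset.sum_congr rfl fun k hk => ?_
      simp only [N, PowerSeries.coeff_mk, if_pos hk]
    have hOne : HasSum (fun n => (1 : PowerSeries ℂ).coeff n * w ^ n) 1 := by
      have h := hasSum_single (f := fun n => (1 : PowerSeries ℂ).coeff n * w ^ n) 0
        (fun n hn => by simp [PowerSeries.coeff_one, hn])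
      simpa using h
    have hDsum : HasSum (fun n => (1 + B).coeff n * w ^ n)
        (1 + ∑ k ∈ Finset.Icc 1 t, b k * w ^ k) := by
      convert hOne.add hBsum using 2 with n
      rw [map_add, add_mul]
    have hne : 1 + ∑ k ∈ Finset.Icc 1 t, b k * w ^ k ≠ 0 := by
      have hgeom : HasSum (fun n : ℕ => x * ((1 / 2 : ℝ) / 2 ^ n)) (x * 1) := by
        exact (hasSum_geometric_two' (1 : ℝ)).mul_left x
      have hle : ‖∑ k ∈ Finset.Icc 1 t, b k * w ^ k‖ ≤ x := by
        rw [← Finset.Ico_add_one_right_eq_Icc, Finset.sum_Ico_eq_sum_range]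
        refine (norm_sum_le _ _).trans ?_
        refine le_trans (Finset.sum_le_sum fun k hk => ?_)
          ((sum_le_hasSum (Finset.range (t + 1 - 1)) (fun i _ => by positivity) hgeom).trans_eq
            (mul_one x))
        have hk' := Finset.mem_range.mp hk
        rw [norm_mul, norm_pow]
        refine mul_le_mul (hb _ (Finset.mem_Icc.mpr (by omega))) ?_ (by positivity) hx0
        refine (pow_le_pow_left₀ (norm_nonneg w) hw.le _).trans_eq ?_
        rw [pow_add, pow_one, one_div_pow]
        ring
      intro h0
      have h1 : ‖∑ k ∈ Finset.Icc 1 t, b k * w ^ k‖ = 1 := by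
        rw [eq_neg_of_add_eq_zero_right h0, norm_neg, norm_one]
      linarith
    have hCs : Summable fun n => ‖C.coeff n * w ^ n‖ := by
      rw [← summable_nat_add_iff 1]
      have hg : Summable fun n : ℕ => x * ‖w‖ * (2 * ‖w‖) ^ n :=
        (summable_geometric_of_lt_one (by positivity) (by linarith)).mul_left _
      refine Summable.of_nonneg_of_le (fun _ => norm_nonneg _) (fun n => ?_) hg
      rw [norm_mul, norm_pow]
      calc ‖C.coeff (n + 1)‖ * ‖w‖ ^ (n + 1) ≤ x * 2 ^ n * ‖w‖ ^ (n + 1) :=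
            mul_le_mul_of_nonneg_right (hbound n) (by positivity)
        _ = x * ‖w‖ * (2 * ‖w‖) ^ n := by rw [mul_pow]; ring
    refine ⟨hne, (summable_nat_add_iff 2).mpr hCs, ?_⟩
    have hmul := tsum_mul_eval C (1 + B) w hCs hDsum.summable.norm
    rw [hCD, hDsum.tsum_eq, hNsum.tsum_eq] at hmul
    rw [div_eq_iff hne, ← hmul, ← hCs.of_norm.sum_add_tsum_nat_add 2]
    simp only [Finset.sum_range_succ, Finset.sum_range_zero, hC0, hC1]
    ring
end

section
/- Let q ∈ ℂ with |q| ≥ 6, let ρ > 0 and σ > 0 satisfy ρ² + σ² ≤ |q|², and let λ be a real number with 0 ≤ λ ≤ 1/|q|. For each integer j ≥ 2 let c_j : ℂ → ℂ satisfy |c_j(w)| ≤ 2^{j−1} |q|^{(j−1)|w|} for all w ∈ ℂ with |w| ≤ |q|. Let y : ℂ → ℂ satisfy |y(w)| ≤ 1/|q| for all w ∈ D(ρ,σ) and y(z/q^m) = y(z)/|q|^m for all z ∈ D(ρ,σ) and all natural numbers m. Then for every z ∈ D(ρ,σ), the double series ∑_{j=2}^{∞} ∑_{m=0}^{∞} λ^m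 c_j(z/q^{m+1}) y(z/q^{m+1})^j converges absolutely and its sum T[y](z) satisfies |T[y](z)| ≤ 1/(4|q|). -/
/-!
Write `Q = ‖q‖ ≥ 6` and `w = z / q ^ (m + 1)`. Since `‖z‖ ≤ Q`, one has `‖w‖ ≤ 1`, so
`‖c j w‖ ≤ (2 Q) ^ (j - 1)`, while the scaling relation gives `‖y w‖ ≤ Q⁻¹ / Q ^ (m + 1) ≤ Q⁻²`.
With `j = i + 2`, the `(i, m)` term is therefore at most
`Q⁻ᵐ (2 / Q) ^ (i + 1) Q⁻² ≤ Q⁻¹ (1/18) (1/3) ^ i (1/6) ^ m`. This is a product of two geometric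
series, with total `Q⁻¹ / 10`, which is below `1 / (4 Q)`.
-/

/-- The elementary estimate for a single term, with `a`, `C`, `Y` standing for `λ` and the norms
of `c (i + 2) w` and `y w`. -/
lemma term_bound {Q a C Y : ℝ} (hQ : 6 ≤ Q) (ha0 : 0 ≤ a) (ha : a ≤ 1 / Q) (i m : ℕ)
    (hC0 : 0 ≤ C) (hC : C ≤ (2 * Q) ^ (i + 1)) (hY0 : 0 ≤ Y) (hY : Y ≤ (1 / Q) ^ 2) :
    a ^ m * C * Y ^ (i + 2) ≤ (1 / Q * (1 / 18)) * ((1 / 3) ^ i * (1 / 6) ^ m) := by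
  have hQ0 : 0 < Q := by linarith
  have hr : 1 / Q ≤ 1 / 6 := one_div_le_one_div_of_le (by norm_num) hQ
  have hr0 : 0 ≤ 1 / Q := by positivity
  have key : (2 * Q) ^ (i + 1) * ((1 / Q) ^ 2) ^ (i + 2)
      = (2 * (1 / Q)) ^ (i + 1) * ((1 / Q) * (1 / Q)) := by
    have h : 2 * (1 / Q) = 2 * Q * (1 / Q) ^ 2 := by field_simp
    rw [h, mul_pow (2 * Q)]
    ring
  calc a ^ m * C * Y ^ (i + 2)
      ≤ (1 / 6) ^ m * (2 * Q) ^ (i + 1) * ((1 / Q) ^ 2) ^ (i + 2) := by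
        gcongr
        exact ha.trans hr
    _ = (1 / 6) ^ m * ((2 * (1 / Q)) ^ (i + 1) * ((1 / Q) * (1 / Q))) := by
        rw [mul_assoc, key]
    _ ≤ (1 / 6) ^ m * ((1 / 3) ^ (i + 1) * ((1 / Q) * (1 / 6))) := by
        gcongr
        linarith
    _ = _ := by ring

/-- With `|q| ≥ 6`, `ρ² + σ² ≤ |q|²`, `0 ≤ λ ≤ 1/|q|`, and
`|c_j(w)| ≤ 2^{j-1} |q|^{(j-1)|w|}` for `|w| ≤ |q|`, the double series
`T[y](z) = ∑_{j≥2} ∑_{m≥0} λ^m c_j(z/q^{m+1}) y(z/q^{m+1})^j` converges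
absolutely on `D(ρ,σ)` and its sum is bounded by `1/(4|q|)`. -/
theorem stmt18 (q : ℂ) (hq : 6 ≤ ‖q‖) (ρ σ : ℝ) (hρ : 0 < ρ) (hσ : 0 < σ)
    (hρσ : ρ ^ 2 + σ ^ 2 ≤ ‖q‖ ^ 2) (lam : ℝ) (hlam0 : 0 ≤ lam)
    (hlam1 : lam ≤ 1 / ‖q‖)
    (c : ℕ → ℂ → ℂ)
    (hc : ∀ j : ℕ, 2 ≤ j → ∀ w : ℂ, ‖w‖ ≤ ‖q‖ →
      ‖c j w‖ ≤ 2 ^ (j - 1) * ‖q‖ ^ (((j : ℝ) - 1) * ‖w‖))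
    (y : ℂ → ℂ)
    (hybd : ∀ w : ℂ, |w.re| ≤ ρ → |w.im| ≤ σ → ‖y w‖ ≤ 1 / ‖q‖)
    (hyscale : ∀ (m : ℕ) (z : ℂ), |z.re| ≤ ρ → |z.im| ≤ σ →
      y (z / q ^ m) = y z / (‖q‖ : ℂ) ^ m) :
    ∀ z : ℂ, |z.re| ≤ ρ → |z.im| ≤ σ →
      Summable (fun jm : ℕ × ℕ =>
        ‖(lam : ℂ) ^ jm.2 * c (jm.1 + 2) (z / q ^ (jm.2 + 1)) *
          y (z / q ^ (jm.2 + 1)) ^ (jm.1 + 2)‖) ∧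
      ‖∑' jm : ℕ × ℕ, (lam : ℂ) ^ jm.2 * c (jm.1 + 2) (z / q ^ (jm.2 + 1)) *
          y (z / q ^ (jm.2 + 1)) ^ (jm.1 + 2)‖ ≤ 1 / (4 * ‖q‖) := by
  intro z hz1 hz2
  have hQ0 : 0 < ‖q‖ := by linarith
  have hQ1 : 1 ≤ ‖q‖ := by linarith
  have hzn : ‖z‖ ≤ ‖q‖ := by
    have h1 : z.re ^ 2 ≤ ρ ^ 2 := sq_le_sq.mpr (hz1.trans (le_abs_self ρ))
    have h2 : z.im ^ 2 ≤ σ ^ 2 := sq_le_sq.mpr (hz2.trans (le_abs_self σ))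
    have h3 : ‖z‖ ^ 2 = z.re ^ 2 + z.im ^ 2 := by
      rw [Complex.sq_norm, Complex.normSq_apply]; ring
    exact abs_le_of_sq_le_sq' (by linarith) hQ0.le |>.2
  have hpow : ∀ m : ℕ, ‖q‖ ≤ ‖q‖ ^ (m + 1) := fun m => le_self_pow₀ hQ1 (by omega)
  have hw : ∀ m : ℕ, ‖z / q ^ (m + 1)‖ ≤ 1 := fun m => by
    rw [norm_div, norm_pow]
    exact div_le_one_of_le₀ (hzn.trans (hpow m)) (by positivity)
  have hy : ∀ m : ℕ, ‖y (z / q ^ (m + 1))‖ ≤ (1 / ‖q‖) ^ 2 := fun m => by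
    rw [hyscale _ z hz1 hz2, norm_div, norm_pow, Complex.norm_real, norm_norm]
    calc ‖y z‖ / ‖q‖ ^ (m + 1) ≤ (1 / ‖q‖) / ‖q‖ := by
          gcongr
          · exact hybd z hz1 hz2
          · exact hpow m
      _ = _ := by field_simp
  have hcb : ∀ i m : ℕ, ‖c (i + 2) (z / q ^ (m + 1))‖ ≤ (2 * ‖q‖) ^ (i + 1) := fun i m => by
    refine (hc (i + 2) (by omega) _ ((hw m).trans hQ1)).trans ?_
    rw [mul_pow, show i + 2 - 1 = i + 1 by omega, ← Real.rpow_natCast ‖q‖ (i + 1)]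
    gcongr
    push_cast
    have hi : (0 : ℝ) ≤ i := i.cast_nonneg
    nlinarith [hw m]
  have hb : ∀ jm : ℕ × ℕ, ‖(lam : ℂ) ^ jm.2 * c (jm.1 + 2) (z / q ^ (jm.2 + 1)) *
      y (z / q ^ (jm.2 + 1)) ^ (jm.1 + 2)‖ ≤
      (1 / ‖q‖ * (1 / 18)) * ((1 / 3) ^ jm.1 * (1 / 6) ^ jm.2) := fun jm => by
    rw [norm_mul, norm_mul, norm_pow, norm_pow, Complex.norm_real, Real.norm_of_nonneg hlam0]
    exact term_bound hq hlam0 hlam1 _ _ (norm_nonneg _) (hcb _ _) (norm_nonneg _) (hy _)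
  have g3 : HasSum (fun n : ℕ => (1 / 3 : ℝ) ^ n) (1 - 1 / 3)⁻¹ :=
    hasSum_geometric_of_lt_one (by norm_num) (by norm_num)
  have g6 : HasSum (fun n : ℕ => (1 / 6 : ℝ) ^ n) (1 - 1 / 6)⁻¹ :=
    hasSum_geometric_of_lt_one (by norm_num) (by norm_num)
  have hs : HasSum (fun jm : ℕ × ℕ => (1 / ‖q‖ * (1 / 18)) *
      ((1 / 3 : ℝ) ^ jm.1 * (1 / 6 : ℝ) ^ jm.2))
      ((1 / ‖q‖ * (1 / 18)) * ((1 - 1 / 3)⁻¹ * (1 - 1 / 6)⁻¹)) :=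
    (g3.mul g6 (g3.summable.mul_of_nonneg g6.summable
      (fun _ => by positivity) (fun _ => by positivity))).mul_left _
  refine ⟨Summable.of_nonneg_of_le (fun _ => norm_nonneg _) hb hs.summable,
    (tsum_of_norm_bounded hs hb).trans ?_⟩
  have hr0 : 0 ≤ 1 / ‖q‖ := by positivity
  have h4 : 1 / (4 * ‖q‖) = 1 / ‖q‖ * (1 / 4) := by field_simp
  rw [h4]
  rw [mul_assoc]
  exact mul_le_mul_of_nonneg_left (by norm_num) hr0
end
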